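/- Let 0 < m < n be integers, μ, τ > 0, and suppose the polynomial p_{n,m}(r) = r^n + Γ(1 + m/n) r^{n−m} + 1 has n pairwise distinct complex roots r_1, …, r_n, and let G_{m/n} be the Andrade relaxation modulus; write α = m/n. Then G_{m/n} satisfies the Volterra integral equation of the second kind: for every t > 0, G_{m/n}(t) = μ − (1/τ) ∫₀^t [1 + α((t−x)/τ)^{α−1}] G_{m/n}(x) dx. -/

import Mathlib

open MeasureTheory Set Finset

/-- The two-parameter Mittag–Leffler function
`E_{α,β}(z) = ∑_{k=0}^∞ z^k / Γ(β + αk)`. -/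
noncomputable def mittagLeffler (α β : ℝ) (z : ℂ) : ℂ :=
  ∑' k : ℕ, z ^ k / (Real.Gamma (β + α * k) : ℂ)

/-!
The kernel `e_{a,b}(ρ, x) = x^(b-1) E_{a,b}(ρ x^a)` has Laplace transform `p^(a-b) / (p^a - ρ)`, so
for a monic polynomial `P` with distinct roots `r_k`, partial fractions show that
`∑_k e_{a,a}(r_k, x) / P'(r_k)` has Laplace transform `1 / P(p^a)`. Multiplying by `P(p^a)`, where
`p^(-c)` is convolution with the Riemann–Liouville kernel of order `c`, gives a Volterra equation
whose kernel has the coefficients of `P`; for the Andrade polynomial and `a = 1/n` that kernel comes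
from the creep law.

No Laplace transform is needed: expanding `e_{a,b}` to order `i` gives
`e_{a,b}(ρ, x) = ∑_{j<i} ρ^j x^(b+aj-1) / Γ(b+aj) + ρ^i e_{a,b+ai}(ρ, x)`. Choosing `i` so that all
the remainders coincide, they add up to a multiple of `P(r_k) = 0`, and Lagrange interpolation
annihilates all the leading terms but one.
-/

lemma exp_neg_mul_rpow_le_Gamma {R x : ℝ} (hR : 0 ≤ R) (hx : 1 ≤ x) :
    Real.exp (-R) * R ^ (x - 1) ≤ Real.Gamma x := by
  have hIoi : Set.Ioi R ⊆ Set.Ioi 0 := Set.Ioi_subset_Ioi hR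
  have hint := Real.GammaIntegral_convergent (zero_lt_one.trans_le hx)
  calc Real.exp (-R) * R ^ (x - 1)
      = ∫ y in Set.Ioi R, Real.exp (-y) * R ^ (x - 1) := by
        rw [integral_mul_const, integral_exp_neg_Ioi]
    _ ≤ ∫ y in Set.Ioi R, Real.exp (-y) * y ^ (x - 1) := by
        refine setIntegral_mono_on ((integrableOn_exp_neg_Ioi R).mul_const _)
          (hint.mono_set hIoi) measurableSet_Ioi fun y hy ↦ ?_
        have hRy : R ≤ y := le_of_lt hy
        have : 0 ≤ x - 1 := sub_nonneg.2 hx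
        gcongr
    _ ≤ ∫ y in Set.Ioi 0, Real.exp (-y) * y ^ (x - 1) :=
        setIntegral_mono_set hint
          (ae_restrict_of_forall_mem measurableSet_Ioi fun y hy ↦
            mul_nonneg (Real.exp_pos _).le (Real.rpow_nonneg (le_of_lt hy) _))
          hIoi.eventuallyLE
    _ = Real.Gamma x := (Real.Gamma_eq_integral (zero_lt_one.trans_le hx)).symm

lemma summable_mittagLeffler {α : ℝ} (hα : 0 < α) (β : ℝ) (z : ℂ) :
    Summable fun k : ℕ ↦ z ^ k / (Real.Gamma (β + α * k) : ℂ) := by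
  set q : ℝ := 2 * ‖z‖ + 1
  have hq : 0 < q := by positivity
  obtain ⟨M, hM, hMq⟩ : ∃ M : ℝ, 0 < M ∧ M ^ α = q :=
    ⟨q ^ α⁻¹, by positivity, Real.rpow_inv_rpow hq.le hα.ne'⟩
  have hratio : ‖z‖ / q < 1 := by
    rw [div_lt_one hq]; linarith [norm_nonneg z]
  refine ((summable_geometric_of_lt_one (by positivity) hratio).mul_left
    (Real.exp M * M ^ (1 - β))).of_norm_bounded_eventually_nat ?_
  have hlarge : ∀ᶠ k : ℕ in Filter.atTop, 1 ≤ β + α * k :=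
    (Filter.tendsto_atTop_add_const_left _ β
      (tendsto_natCast_atTop_atTop.const_mul_atTop hα)).eventually_ge_atTop 1
  filter_upwards [hlarge] with k hk
  have hGamma : Real.exp (-M) * (M ^ (β - 1) * q ^ k) ≤ Real.Gamma (β + α * k) := by
    convert exp_neg_mul_rpow_le_Gamma hM.le hk using 2
    rw [← hMq, ← Real.rpow_mul_natCast hM.le, ← Real.rpow_add hM]
    ring_nf
  calc ‖z ^ k / (Real.Gamma (β + α * k) : ℂ)‖
      = ‖z‖ ^ k / Real.Gamma (β + α * k) := by
        rw [norm_div, norm_pow, Complex.norm_real,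
          Real.norm_of_nonneg (Real.Gamma_pos_of_pos (by linarith)).le]
    _ ≤ ‖z‖ ^ k / (Real.exp (-M) * (M ^ (β - 1) * q ^ k)) := by gcongr
    _ = Real.exp M * M ^ (1 - β) * (‖z‖ / q) ^ k := by
        rw [← neg_sub β 1, Real.rpow_neg hM.le, Real.exp_neg, div_pow]
        field_simp

lemma differentiable_mittagLeffler {α : ℝ} (hα : 0 < α) (β : ℝ) :
    Differentiable ℂ (mittagLeffler α β) := by
  intro z
  have hsum := (summable_mittagLeffler hα β ((‖z‖ + 1 : ℝ) : ℂ)).norm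
  refine (Complex.differentiableOn_tsum_of_summable_norm hsum
    (fun k ↦ by fun_prop) Metric.isOpen_ball fun k w hw ↦ ?_).differentiableAt
      (Metric.isOpen_ball.mem_nhds (show z ∈ Metric.ball 0 (‖z‖ + 1) by simp))
  have hw' : ‖w‖ ≤ ‖z‖ + 1 := (mem_ball_zero_iff.1 hw).le
  rw [norm_div, norm_div, norm_pow, norm_pow, Complex.norm_of_nonneg (r := ‖z‖ + 1) (by positivity)]
  gcongr

/-- The Riemann–Liouville kernel of order `b`, convolution with which is fractional integration of
order `b`. It is meaningful for `b > 0` and `x > 0`. -/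
noncomputable def rlKernel (b x : ℝ) : ℝ := x ^ (b - 1) / Real.Gamma b

lemma rlKernel_one (x : ℝ) : rlKernel 1 x = 1 := by
  simp only [rlKernel, sub_self, Real.rpow_zero, Real.Gamma_one, div_one]

lemma rlKernel_pos {b x : ℝ} (hb : 0 < b) (hx : 0 < x) : 0 < rlKernel b x :=
  div_pos (Real.rpow_pos_of_pos hx _) (Real.Gamma_pos_of_pos hb)

lemma rlKernel_nonneg {b x : ℝ} (hb : 0 < b) (hx : 0 ≤ x) : 0 ≤ rlKernel b x :=
  div_nonneg (Real.rpow_nonneg hx _) (Real.Gamma_pos_of_pos hb).le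

lemma integral_rpow_mul_sub_rpow {b c x : ℝ} (hb : 0 < b) (hc : 0 < c) (hx : 0 < x) :
    ∫ y in (0 : ℝ)..x, y ^ (b - 1) * (x - y) ^ (c - 1) =
      x ^ (b + c - 1) * ProbabilityTheory.beta b c := by
  have hbeta := Complex.betaIntegral_eq_Gamma_mul_div b c (by simpa using hb) (by simpa using hc)
  rw [← Complex.ofReal_inj, ← intervalIntegral.integral_ofReal]
  calc ∫ y in (0 : ℝ)..x, ((y ^ (b - 1) * (x - y) ^ (c - 1) : ℝ) : ℂ)
      = ∫ y in (0 : ℝ)..x, (y : ℂ) ^ ((b : ℂ) - 1) * ((x : ℂ) - y) ^ ((c : ℂ) - 1) := by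
        refine intervalIntegral.integral_congr fun y hy ↦ ?_
        rw [Set.uIcc_of_le hx.le] at hy
        push_cast [Complex.ofReal_cpow hy.1, Complex.ofReal_cpow (sub_nonneg.2 hy.2)]
        rfl
    _ = (x : ℂ) ^ ((b : ℂ) + c - 1) * Complex.betaIntegral b c :=
        Complex.betaIntegral_scaled _ _ hx
    _ = ((x ^ (b + c - 1) * ProbabilityTheory.beta b c : ℝ) : ℂ) := by
        rw [hbeta, ← Complex.ofReal_add, Complex.Gamma_ofReal, Complex.Gamma_ofReal,
          Complex.Gamma_ofReal, ProbabilityTheory.beta]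
        push_cast [Complex.ofReal_cpow hx.le]
        rfl

lemma integral_rlKernel_mul_rlKernel {b c x : ℝ} (hb : 0 < b) (hc : 0 < c) (hx : 0 < x) :
    ∫ y in (0 : ℝ)..x, rlKernel c (x - y) * rlKernel b y = rlKernel (b + c) x := by
  have hΓb := (Real.Gamma_pos_of_pos hb).ne'
  have hΓc := (Real.Gamma_pos_of_pos hc).ne'
  calc ∫ y in (0 : ℝ)..x, rlKernel c (x - y) * rlKernel b y
      = ∫ y in (0 : ℝ)..x,
          (Real.Gamma b * Real.Gamma c)⁻¹ * (y ^ (b - 1) * (x - y) ^ (c - 1)) := by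
        congr! 2 with y
        rw [rlKernel, rlKernel]
        field_simp
    _ = rlKernel (b + c) x := by
        rw [intervalIntegral.integral_const_mul, integral_rpow_mul_sub_rpow hb hc hx,
          ProbabilityTheory.beta, rlKernel]
        field_simp

lemma intervalIntegrable_rlKernel_mul_rlKernel {b c x : ℝ}
    (hb : 0 < b) (hc : 0 < c) (hx : 0 < x) :
    IntervalIntegrable (fun y ↦ rlKernel c (x - y) * rlKernel b y) volume 0 x := by
  -- A non-integrable function has integral `0`, but this integral is known to be positive.
  by_contra hnot
  have hzero := intervalIntegral.integral_undef hnot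
  rw [integral_rlKernel_mul_rlKernel hb hc hx] at hzero
  exact (rlKernel_pos (add_pos hb hc) hx).ne' hzero

/-- The kernel `e_{a,b}(ρ, x) = x^(b-1) E_{a,b}(ρ x^a)`, the form in which Mittag–Leffler functions
solve fractional differential equations; `a` and `b` are its two orders. It is meaningful for
`x > 0`. -/
noncomputable def mittagLefflerKernel (a b : ℝ) (ρ : ℂ) (x : ℝ) : ℂ :=
  (x ^ (b - 1) : ℝ) * mittagLeffler a b (ρ * (x ^ a : ℝ))

section MittagLefflerKernel

variable {a b c x : ℝ}

lemma hasSum_mittagLefflerKernel (ha : 0 < a) (b : ℝ) (ρ : ℂ) (hx : 0 < x) :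
    HasSum (fun j : ℕ ↦ ρ ^ j * (rlKernel (b + a * j) x : ℂ)) (mittagLefflerKernel a b ρ x) := by
  refine ((summable_mittagLeffler ha b (ρ * (x ^ a : ℝ))).hasSum.mul_left
    ((x ^ (b - 1) : ℝ) : ℂ)).congr_fun fun j ↦ ?_
  have hpow : x ^ (b + a * j - 1) = x ^ (b - 1) * (x ^ a) ^ j := by
    rw [← Real.rpow_mul_natCast hx.le, ← Real.rpow_add hx]
    ring_nf
  rw [rlKernel, hpow]
  push_cast
  ring

lemma mittagLefflerKernel_eq_sum_range_add (ha : 0 < a) (b : ℝ) (ρ : ℂ) (hx : 0 < x) (i : ℕ) :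
    mittagLefflerKernel a b ρ x =
      ∑ j ∈ range i, ρ ^ j * (rlKernel (b + a * j) x : ℂ) +
        ρ ^ i * mittagLefflerKernel a (b + a * i) ρ x := by
  have hsum := hasSum_mittagLefflerKernel ha b ρ hx
  rw [← hsum.tsum_eq, ← hsum.summable.sum_add_tsum_nat_add i,
    ← (hasSum_mittagLefflerKernel ha (b + a * i) ρ hx).tsum_eq, ← tsum_mul_left]
  congr! 3 with j
  rw [pow_add, show b + a * ((j + i : ℕ) : ℝ) = b + a * i + a * j by push_cast; ring]
  ring

lemma intervalIntegrable_rlKernel_mul_mittagLefflerKernel (ha : 0 < a) (hb : 0 < b) (hc : 0 < c)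
    (ρ : ℂ) (hx : 0 < x) :
    IntervalIntegrable (fun y ↦ (rlKernel c (x - y) : ℂ) * mittagLefflerKernel a b ρ y)
      volume 0 x := by
  have hcont : Continuous fun y : ℝ ↦ Real.Gamma b * mittagLeffler a b (ρ * (y ^ a : ℝ)) := by
    have := (differentiable_mittagLeffler ha b).continuous
    have := Real.continuous_rpow_const ha.le
    fun_prop
  have hkernel : IntervalIntegrable (fun y ↦ ((rlKernel c (x - y) * rlKernel b y : ℝ) : ℂ))
      volume 0 x :=
    (intervalIntegrable_iff_integrableOn_Ioc_of_le hx.le).2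
      (intervalIntegrable_rlKernel_mul_rlKernel hb hc hx).1.ofReal
  refine (hkernel.mul_continuousOn hcont.continuousOn).congr fun y _ ↦ ?_
  have hΓ : (Real.Gamma b : ℂ) ≠ 0 := by exact_mod_cast (Real.Gamma_pos_of_pos hb).ne'
  simp only [rlKernel, mittagLefflerKernel]
  push_cast
  field_simp

lemma integral_rlKernel_mul_mittagLefflerKernel (ha : 0 < a) (hb : 0 < b) (hc : 0 < c)
    (ρ : ℂ) (hx : 0 < x) :
    ∫ y in (0 : ℝ)..x, (rlKernel c (x - y) : ℂ) * mittagLefflerKernel a b ρ y =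
      mittagLefflerKernel a (b + c) ρ x := by
  have hbj (j : ℕ) : 0 < b + a * j := by positivity
  set F : ℕ → ℝ → ℝ := fun j y ↦ rlKernel c (x - y) * rlKernel (b + a * j) y
  have hF_int (j : ℕ) : IntegrableOn (F j) (Set.Ioc 0 x) :=
    (intervalIntegrable_rlKernel_mul_rlKernel (hbj j) hc hx).1
  have hF_integral (j : ℕ) : ∫ y in Set.Ioc 0 x, F j y = rlKernel (b + c + a * j) x := by
    rw [← intervalIntegral.integral_of_le hx.le,
      integral_rlKernel_mul_rlKernel (hbj j) hc hx, add_right_comm]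
  have hF_norm (j : ℕ) : ∫ y in Set.Ioc 0 x, ‖ρ ^ j * (F j y : ℂ)‖ =
      ‖ρ ^ j * (rlKernel (b + c + a * j) x : ℂ)‖ := by
    rw [norm_mul, Complex.norm_of_nonneg (rlKernel_nonneg (by positivity) hx.le),
      ← hF_integral, ← integral_const_mul]
    refine setIntegral_congr_fun measurableSet_Ioc fun y hy ↦ ?_
    have hFy : 0 ≤ F j y :=
      mul_nonneg (rlKernel_nonneg hc (sub_nonneg.2 hy.2)) (rlKernel_nonneg (hbj j) hy.1.le)
    simp only [norm_mul, Complex.norm_of_nonneg hFy]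
  have hsum := hasSum_mittagLefflerKernel ha (b + c) ρ hx
  calc ∫ y in (0 : ℝ)..x, (rlKernel c (x - y) : ℂ) * mittagLefflerKernel a b ρ y
      = ∫ y in Set.Ioc 0 x, ∑' j, ρ ^ j * (F j y : ℂ) := by
        rw [intervalIntegral.integral_of_le hx.le]
        refine setIntegral_congr_fun measurableSet_Ioc fun y hy ↦ ?_
        simp only [← (hasSum_mittagLefflerKernel ha b ρ hy.1).tsum_eq, ← tsum_mul_left, F]
        congr! 2 with j
        push_cast
        ring
    _ = ∑' j, ∫ y in Set.Ioc 0 x, ρ ^ j * (F j y : ℂ) :=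
        (integral_tsum_of_summable_integral_norm (fun j ↦ (hF_int j).ofReal.const_mul _)
          (by simpa only [hF_norm] using hsum.summable.norm)).symm
    _ = ∑' j : ℕ, ρ ^ j * (rlKernel (b + c + a * j) x : ℂ) := by
        simp only [integral_const_mul, integral_complex_ofReal, hF_integral]
    _ = mittagLefflerKernel a (b + c) ρ x := hsum.tsum_eq

end MittagLefflerKernel

section Nodal

open Polynomial Lagrange

variable {ι : Type*} {s : Finset ι}

section CommRing

variable {R : Type*} [CommRing R] {v : ι → R}

lemma coeff_card_nodal [Nontrivial R] : (nodal s v).coeff #s = 1 := by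
  simpa only [natDegree_nodal] using (nodal_monic (s := s) (v := v)).coeff_natDegree

lemma eq_nodal_of_monic [IsDomain R] {P : R[X]} (hP : P.Monic) (hdeg : P.natDegree = #s)
    (hv : Set.InjOn v s) (hroot : ∀ i ∈ s, P.eval (v i) = 0) : P = nodal s v := by
  refine eq_of_degree_sub_lt_of_eval_index_eq s hv ?_ fun i hi ↦ ?_
  · rw [← hdeg, ← degree_eq_natDegree hP.ne_zero]
    refine degree_sub_lt_left ?_ hP.ne_zero ?_
    · rw [degree_nodal, degree_eq_natDegree hP.ne_zero, hdeg]
    · rw [hP.leadingCoeff, nodal_monic.leadingCoeff]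
  · rw [hroot i hi, eval_nodal_at_node hi]

end CommRing

variable {F : Type*} [Field F] {v : ι → F}

lemma sum_pow_div_eval_derivative_nodal (hv : Set.InjOn v s) {j : ℕ} (hj : j < #s) :
    ∑ k ∈ s, v k ^ j / (derivative (nodal s v)).eval (v k) = if j = #s - 1 then 1 else 0 := by
  classical
  have hcoeff := coeff_eq_sum hv (P := X ^ j) (by simpa using hj)
  rw [coeff_X_pow] at hcoeff
  calc ∑ k ∈ s, v k ^ j / (derivative (nodal s v)).eval (v k)
      = ∑ k ∈ s, (X ^ j : F[X]).eval (v k) / ∏ i ∈ s.erase k, (v k - v i) :=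
        Finset.sum_congr rfl fun k hk ↦ by
          rw [eval_nodal_derivative_eval_node_eq hk, eval_nodal, eval_pow, eval_X]
    _ = if j = #s - 1 then 1 else 0 := by
        simp only [← hcoeff, eq_comm]

lemma sum_sum_range_pow_mul_div_eval_derivative_nodal (hs : s.Nonempty) (hv : Set.InjOn v s)
    {i : ℕ} (hi : i ≤ #s) (f : ℕ → F) :
    ∑ k ∈ s, (∑ j ∈ range i, v k ^ j * f j) / (derivative (nodal s v)).eval (v k) =
      if i = #s then f (#s - 1) else 0 := by
  calc _ = ∑ j ∈ range i, (∑ k ∈ s, v k ^ j / (derivative (nodal s v)).eval (v k)) * f j := by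
        simp only [sum_div, sum_mul]
        rw [sum_comm]
        simp only [div_mul_eq_mul_div]
    _ = ∑ j ∈ range i, if j = #s - 1 then f j else 0 := by
        refine sum_congr rfl fun j hj ↦ ?_
        rw [sum_pow_div_eval_derivative_nodal hv ((Finset.mem_range.1 hj).trans_le hi), ite_mul,
          one_mul, zero_mul]
    _ = if i = #s then f (#s - 1) else 0 := by
        have hiff : #s - 1 < i ↔ i = #s := by have := hs.card_pos; lia
        simp only [sum_ite_eq', Finset.mem_range, hiff]

end Nodal

section NodalMittagLeffler

open Polynomial Lagrange

variable {ι : Type*} {s : Finset ι} {v : ι → ℂ} {a b c x : ℝ}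

/-- The divided difference of `ρ ↦ e_{a,b}(ρ, x)` at the distinct nodes `v k`, `k ∈ s`. For
`b = a` it is the fundamental solution of the linear fractional differential equation of order `a`
whose characteristic polynomial has these nodes as its roots. -/
noncomputable def nodalMittagLeffler (a b : ℝ) (s : Finset ι) (v : ι → ℂ) (x : ℝ) : ℂ :=
  ∑ k ∈ s, mittagLefflerKernel a b (v k) x / (derivative (nodal s v)).eval (v k)

lemma intervalIntegrable_rlKernel_mul_nodalMittagLeffler (ha : 0 < a) (hb : 0 < b) (hc : 0 < c)
    (s : Finset ι) (v : ι → ℂ) (hx : 0 < x) :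
    IntervalIntegrable (fun y ↦ (rlKernel c (x - y) : ℂ) * nodalMittagLeffler a b s v y)
      volume 0 x := by
  simp only [nodalMittagLeffler, mul_sum, ← mul_div_assoc]
  simpa only [sum_fn] using! IntervalIntegrable.sum s fun k _ ↦
    (intervalIntegrable_rlKernel_mul_mittagLefflerKernel ha hb hc (v k) hx).div_const _

lemma integral_rlKernel_mul_nodalMittagLeffler (ha : 0 < a) (hb : 0 < b) (hc : 0 < c)
    (s : Finset ι) (v : ι → ℂ) (hx : 0 < x) :
    ∫ y in (0 : ℝ)..x, (rlKernel c (x - y) : ℂ) * nodalMittagLeffler a b s v y =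
      nodalMittagLeffler a (b + c) s v x := by
  simp only [nodalMittagLeffler, mul_sum, ← mul_div_assoc]
  rw [intervalIntegral.integral_finsetSum fun k _ ↦
    (intervalIntegrable_rlKernel_mul_mittagLefflerKernel ha hb hc (v k) hx).div_const _]
  simp only [intervalIntegral.integral_div,
    integral_rlKernel_mul_mittagLefflerKernel ha hb hc _ hx]

lemma nodalMittagLeffler_eq_ite_add_sum (ha : 0 < a) (hs : s.Nonempty) (hv : Set.InjOn v s)
    (hx : 0 < x) {i : ℕ} (hi : i ≤ #s) :
    nodalMittagLeffler a (a + a * (#s - i)) s v x =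
      (if i = #s then (rlKernel (a * #s) x : ℂ) else 0) +
        ∑ k ∈ s, v k ^ i *
          (mittagLefflerKernel a (a + a * #s) (v k) x / (derivative (nodal s v)).eval (v k)) := by
  have hexponent : a + a * (#s - i) + a * i = a + a * #s := by ring
  simp only [nodalMittagLeffler,
    mittagLefflerKernel_eq_sum_range_add ha (a + a * (#s - i)) _ hx i, hexponent, add_div,
    sum_add_distrib, mul_div_assoc, sum_sum_range_pow_mul_div_eval_derivative_nodal hs hv hi]
  congr 1
  refine if_ctx_congr Iff.rfl (fun his ↦ ?_) fun _ ↦ rfl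
  rw [his, Nat.cast_sub hs.card_pos]
  push_cast
  ring_nf

lemma sum_coeff_mul_nodalMittagLeffler (ha : 0 < a) (hs : s.Nonempty) (hv : Set.InjOn v s)
    (hx : 0 < x) :
    ∑ i ∈ range (#s + 1), (nodal s v).coeff i * nodalMittagLeffler a (a + a * (#s - i)) s v x =
      rlKernel (a * #s) x := by
  set w : ι → ℂ := fun k ↦
    mittagLefflerKernel a (a + a * #s) (v k) x / (derivative (nodal s v)).eval (v k)
  have hvanish : ∑ i ∈ range (#s + 1), (nodal s v).coeff i * ∑ k ∈ s, v k ^ i * w k = 0 := by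
    simp only [mul_sum]
    rw [sum_comm]
    refine sum_eq_zero fun k hk ↦ ?_
    have hroot := eval_nodal_at_node (v := v) hk
    rw [eval_eq_sum_range, natDegree_nodal] at hroot
    simp only [← mul_assoc, ← sum_mul, hroot, zero_mul]
  calc _ = ∑ i ∈ range (#s + 1), (nodal s v).coeff i *
        ((if i = #s then (rlKernel (a * #s) x : ℂ) else 0) + ∑ k ∈ s, v k ^ i * w k) :=
        sum_congr rfl fun i hi ↦ by
          rw [nodalMittagLeffler_eq_ite_add_sum ha hs hv hx (mem_range_succ_iff.1 hi)]
    _ = rlKernel (a * #s) x := by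
        simp only [mul_add, sum_add_distrib, hvanish, mul_ite, mul_zero, sum_ite_eq',
          self_mem_range_succ, if_true, coeff_card_nodal, one_mul, add_zero]

lemma nodalMittagLeffler_volterra (ha : 0 < a) (hs : s.Nonempty) (hv : Set.InjOn v s)
    (hx : 0 < x) :
    nodalMittagLeffler a a s v x = rlKernel (a * #s) x -
      ∫ y in (0 : ℝ)..x, (∑ i ∈ range #s, (nodal s v).coeff i * rlKernel (a * (#s - i)) (x - y)) *
        nodalMittagLeffler a a s v y := by
  have hexponent {i : ℕ} (hi : i ∈ range #s) : 0 < a * ((#s : ℝ) - i) :=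
    mul_pos ha (sub_pos.2 (by exact_mod_cast Finset.mem_range.1 hi))
  have hintegral : ∫ y in (0 : ℝ)..x,
        (∑ i ∈ range #s, (nodal s v).coeff i * rlKernel (a * (#s - i)) (x - y)) *
          nodalMittagLeffler a a s v y =
      ∑ i ∈ range #s, (nodal s v).coeff i * nodalMittagLeffler a (a + a * (#s - i)) s v x := by
    simp only [sum_mul, mul_assoc]
    rw [intervalIntegral.integral_finsetSum fun i hi ↦
      (intervalIntegrable_rlKernel_mul_nodalMittagLeffler ha ha (hexponent hi) s v hx).const_mul _]
    refine sum_congr rfl fun i hi ↦ ?_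
    rw [intervalIntegral.integral_const_mul,
      integral_rlKernel_mul_nodalMittagLeffler ha ha (hexponent hi) s v hx]
  rw [hintegral, ← sum_coeff_mul_nodalMittagLeffler ha hs hv hx, sum_range_succ,
    coeff_card_nodal, sub_self, mul_zero, add_zero, one_mul, add_sub_cancel_left]

end NodalMittagLeffler

section Andrade

open Polynomial Lagrange

variable {m n : ℕ}

/-- The characteristic polynomial `p_{n,m}` of the Andrade creep law of exponent `m / n`. -/
noncomputable def andradePolynomial (n m : ℕ) : ℂ[X] :=
  X ^ n + C (Real.Gamma (1 + (m : ℝ) / n) : ℂ) * X ^ (n - m) + 1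

lemma degree_andradePolynomial_tail_lt (hm : 0 < m) (hmn : m < n) :
    (C (Real.Gamma (1 + (m : ℝ) / n) : ℂ) * X ^ (n - m) + 1 : ℂ[X]).degree < n := by
  refine (degree_add_le _ _).trans_lt (max_lt ?_ ?_)
  · exact (degree_C_mul_X_pow_le _ _).trans_lt (by exact_mod_cast (by lia : n - m < n))
  · rw [degree_one]
    exact_mod_cast hm.trans hmn

lemma andradePolynomial_monic (hm : 0 < m) (hmn : m < n) : (andradePolynomial n m).Monic := by
  rw [andradePolynomial, add_assoc]
  exact monic_X_pow_add (degree_andradePolynomial_tail_lt hm hmn)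

lemma natDegree_andradePolynomial (hm : 0 < m) (hmn : m < n) :
    (andradePolynomial n m).natDegree = n := by
  refine natDegree_eq_of_degree_eq_some ?_
  rw [andradePolynomial, add_assoc, degree_add_eq_left_of_degree_lt, degree_X_pow]
  simpa only [degree_X_pow] using degree_andradePolynomial_tail_lt hm hmn

lemma eval_derivative_andradePolynomial (hmn : m ≤ n) (z : ℂ) :
    (derivative (andradePolynomial n m)).eval z =
      n * z ^ (n - 1) + Real.Gamma (1 + (m : ℝ) / n) * ((n : ℂ) - m) * z ^ (n - m - 1) := by
  simp only [andradePolynomial, derivative_add, derivative_X_pow, derivative_C_mul,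
    derivative_one, add_zero, eval_add, eval_mul, eval_C, eval_pow, eval_X, Nat.cast_sub hmn]
  ring

lemma sum_range_coeff_andradePolynomial_mul (hm : 0 < m) (hmn : m < n) (f : ℕ → ℂ) :
    ∑ i ∈ range n, (andradePolynomial n m).coeff i * f i =
      Real.Gamma (1 + (m : ℝ) / n) * f (n - m) + f 0 := by
  have hcoeff : ∀ i ∈ range n, (andradePolynomial n m).coeff i * f i =
      (if i = n - m then Real.Gamma (1 + (m : ℝ) / n) * f i else 0) +
        if i = 0 then f i else 0 := by
    intro i hi
    have hin : i ≠ n := (Finset.mem_range.1 hi).ne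
    simp only [andradePolynomial, coeff_add, coeff_X_pow, coeff_C_mul, coeff_one, hin, if_false,
      zero_add, add_mul, mul_ite, ite_mul, mul_one, one_mul, mul_zero, zero_mul]
  rw [sum_congr rfl hcoeff, sum_add_distrib]
  simp only [sum_ite_eq', Finset.mem_range]
  rw [if_pos (by lia), if_pos (by lia)]

lemma sum_range_coeff_andradePolynomial_mul_rlKernel (hm : 0 < m) (hmn : m < n) (x : ℝ) :
    ∑ i ∈ range n, (andradePolynomial n m).coeff i * rlKernel (1 / n * (n - i)) x =
      ((1 + (m : ℝ) / n * x ^ ((m : ℝ) / n - 1) : ℝ) : ℂ) := by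
  have hn : (n : ℝ) ≠ 0 := by exact_mod_cast (hm.trans hmn).ne'
  have hα : (0 : ℝ) < m / n := div_pos (by exact_mod_cast hm) (by exact_mod_cast hm.trans hmn)
  have hΓ := (Real.Gamma_pos_of_pos hα).ne'
  have hone : 1 / (n : ℝ) * (n - (0 : ℕ)) = 1 := by field_simp; simp
  have hexponent : 1 / (n : ℝ) * (n - (n - m : ℕ)) = m / n := by
    rw [Nat.cast_sub hmn.le]; ring
  have hkernel : Real.Gamma (1 + (m : ℝ) / n) * rlKernel (m / n) x =
      (m : ℝ) / n * x ^ ((m : ℝ) / n - 1) := by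
    rw [add_comm, Real.Gamma_add_one hα.ne', rlKernel]
    field_simp
  rw [sum_range_coeff_andradePolynomial_mul hm hmn (fun i ↦ (rlKernel (1 / n * (n - i)) x : ℂ)),
    hone, hexponent, rlKernel_one, ← Complex.ofReal_mul, hkernel]
  push_cast
  ring

variable {r : Fin n → ℂ}

lemma nodal_eq_andradePolynomial (hm : 0 < m) (hmn : m < n) (hr : Function.Injective r)
    (hroot : ∀ k, (andradePolynomial n m).eval (r k) = 0) :
    nodal univ r = andradePolynomial n m :=
  (eq_nodal_of_monic (andradePolynomial_monic hm hmn)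
    (by rw [natDegree_andradePolynomial hm hmn, card_univ, Fintype.card_fin])
    hr.injOn fun k _ ↦ hroot k).symm

lemma nodalMittagLeffler_andrade_volterra (hm : 0 < m) (hmn : m < n)
    (hr : Function.Injective r) (hroot : ∀ k, (andradePolynomial n m).eval (r k) = 0)
    {x : ℝ} (hx : 0 < x) :
    nodalMittagLeffler (1 / n) (1 / n) univ r x = 1 -
      ∫ y in (0 : ℝ)..x, ((1 + (m : ℝ) / n * (x - y) ^ ((m : ℝ) / n - 1) : ℝ) : ℂ) *
        nodalMittagLeffler (1 / n) (1 / n) univ r y := by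
  have hn : (0 : ℝ) < n := by exact_mod_cast hm.trans hmn
  have hvolterra := nodalMittagLeffler_volterra (one_div_pos.2 hn)
    ⟨⟨0, hm.trans hmn⟩, mem_univ _⟩ hr.injOn hx
  simpa only [nodal_eq_andradePolynomial hm hmn hr hroot, card_univ, Fintype.card_fin,
    sum_range_coeff_andradePolynomial_mul_rlKernel hm hmn, one_div_mul_cancel hn.ne',
    rlKernel_one, Complex.ofReal_one] using hvolterra

end Andrade

lemma volterra_comp_div {K u : ℝ → ℂ} {μ τ t : ℝ}
    (hu : u (t / τ) = 1 - ∫ y in (0 : ℝ)..(t / τ), K (t / τ - y) * u y) :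
    μ * u (t / τ) = μ - 1 / τ * ∫ x in (0 : ℝ)..t, K ((t - x) / τ) * (μ * u (x / τ)) := by
  have hscale := intervalIntegral.inv_smul_integral_comp_div
    (fun y ↦ K (t / τ - y) * u y) (a := 0) (b := t) τ
  rw [zero_div, Complex.real_smul] at hscale
  simp only [hu, ← hscale, sub_div, mul_left_comm _ (μ : ℂ), intervalIntegral.integral_const_mul]
  push_cast
  ring

/-- **Volterra integral equation for the Andrade relaxation modulus**:
with `α = m/n`, for every `t > 0`,
`G_{m/n}(t) = μ − (1/τ) ∫₀^t [1 + α((t−x)/τ)^{α−1}] G_{m/n}(x) dx`. -/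
theorem andrade_relaxation_modulus_volterra (m n : ℕ) (hm : 0 < m) (hmn : m < n)
    (μ τ : ℝ) (hμ : 0 < μ) (hτ : 0 < τ)
    (r : Fin n → ℂ) (hr : Function.Injective r)
    (hroot : ∀ k, r k ^ n + (Real.Gamma (1 + (m : ℝ) / n) : ℂ) * r k ^ (n - m) + 1 = 0)
    (G : ℝ → ℂ)
    (hG : ∀ t : ℝ, 0 < t → G t =
      (μ : ℂ) * (((t / τ) ^ ((1 : ℝ) / n - 1) : ℝ) : ℂ) *
        ∑ k, mittagLeffler ((1 : ℝ) / n) ((1 : ℝ) / n)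
            (r k * (((t / τ) ^ ((1 : ℝ) / n) : ℝ) : ℂ)) /
          ((n : ℂ) * r k ^ (n - 1) +
            (Real.Gamma (1 + (m : ℝ) / n) : ℂ) * ((n : ℂ) - m) * r k ^ (n - m - 1))) :
    ∀ t : ℝ, 0 < t →
      G t = (μ : ℂ) - (1 / (τ : ℂ)) *
        ∫ x in (0:ℝ)..t,
          (((1 + ((m : ℝ) / n) * (((t - x) / τ) ^ ((m : ℝ) / n - 1))) : ℝ) : ℂ) * G x := by
  intro t ht
  have heval (k : Fin n) : (andradePolynomial n m).eval (r k) = 0 := by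
    simpa [andradePolynomial] using hroot k
  have hG' {x : ℝ} (hx : 0 < x) :
      G x = μ * nodalMittagLeffler (1 / n) (1 / n) univ r (x / τ) := by
    simp only [hG x hx, nodalMittagLeffler, mittagLefflerKernel, mul_sum, mul_assoc, mul_div_assoc,
      nodal_eq_andradePolynomial hm hmn hr heval, eval_derivative_andradePolynomial hmn.le]
  rw [intervalIntegral.integral_congr_Ioo_of_le ht.le fun x hx ↦ by rw [hG' hx.1], hG' ht]
  exact volterra_comp_div (K := fun x ↦ ((1 + m / n * x ^ ((m : ℝ) / n - 1) : ℝ) : ℂ))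
    (nodalMittagLeffler_andrade_volterra hm hmn hr heval (div_pos ht hτ))
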